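/- Define a : ℕ → ℕ by a_{ord(J)} := ∏_{k=1}^{t} (|J_k| + 1) for every finite set J of positive integers with runs J_1, …, J_t. Then for every m ≥ 0, a_m = Σ_{k=0}^{m} [ binom(m+k, m−k) · binom(m, k) mod 2 ], where the bracket denotes the residue 0 or 1 of the product of binomial coefficients modulo 2, summed as an ordinary integer. -/

import Mathlib

/-!
Write every `m` as `m + 1 = 2 ^ r * (2 * m' + 1)`. In binary, `m` is `m'` followed by a zero and
then `r` ones, so on the level of sets `J = {1, …, r} ∪ (K + (r + 1))` when `m = ord J` and
`m' = ord K`. The runs of `J` are the translated runs of `K` together with `{1, …, r}` (if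
`r ≠ 0`), hence the product over runs is multiplied by `r + 1` (`prod_runsOf_prependRun`).

On the binomial side, let `F m` be the right-hand side (`binomSum`) and let
`G m = ∑ [C(m + k + 1, 2k + 1) C(m, k) mod 2]` (`binomSumOdd`). Splitting the sums according to
the parity of `k` and applying Lucas' theorem at the prime `2` gives
`F (2m) = F m`, `G (2m) = F m`, `F (2m + 1) = F m + G m`, `G (2m + 1) = G m`.
Appending `r` ones to `2m'` therefore turns `F` into `(r + 1) F m'` (`binomSum_append`), the same
recursion. Strong induction on `m` finishes the proof.
-/

open Finset

/-- Restriction of a subset of `Fin (n+1)` to `Fin n` (forgetting the top element). -/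
def resSet {n : ℕ} (I : Finset (Fin (n + 1))) : Finset (Fin n) :=
  Finset.univ.filter (fun j : Fin n => Fin.castSucc j ∈ I)

mutual
  /-- The matrix `A_n`, rows/columns indexed by subsets of `{1,…,n}` (element `j`
  of `[n]` corresponds to `j-1 : Fin n`, i.e. anti-lexicographic/binary order). -/
  def Amat : (n : ℕ) → Matrix (Finset (Fin n)) (Finset (Fin n)) ℤ
    | 0 => Matrix.of fun _ _ => 1
    | n + 1 => Matrix.of fun I J =>
        if Fin.last n ∈ I then
          if Fin.last n ∈ J then - Bmat n (resSet I) (resSet J)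
          else Amat n (resSet I) (resSet J)
        else Amat n (resSet I) (resSet J)
  /-- The matrix `B_n`. -/
  def Bmat : (n : ℕ) → Matrix (Finset (Fin n)) (Finset (Fin n)) ℤ
    | 0 => Matrix.of fun _ _ => 1
    | n + 1 => Matrix.of fun I J =>
        if Fin.last n ∈ I then
          if Fin.last n ∈ J then - Bmat n (resSet I) (resSet J)
          else 0
        else Amat n (resSet I) (resSet J)
end

/-- The Walsh-Hadamard matrix `H_n`. -/
def Hmat : (n : ℕ) → Matrix (Finset (Fin n)) (Finset (Fin n)) ℤ
  | 0 => Matrix.of fun _ _ => 1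
  | n + 1 => Matrix.of fun I J =>
      if Fin.last n ∈ I ∧ Fin.last n ∈ J then - Hmat n (resSet I) (resSet J)
      else Hmat n (resSet I) (resSet J)

/-- The Möbius matrix `M_n` of the boolean lattice. -/
def Mobmat (n : ℕ) : Matrix (Finset (Fin n)) (Finset (Fin n)) ℤ :=
  Matrix.of fun I J => if I ⊆ J then (-1) ^ (J \ I).card else 0

/-- The zeta matrix `Z_n` of the boolean lattice. -/
def Zetamat (n : ℕ) : Matrix (Finset (Fin n)) (Finset (Fin n)) ℤ :=
  Matrix.of fun I J => if I ⊆ J then 1 else 0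

/-- The subset of `[n] = {1,…,n}` corresponding to a subset of `Fin n`. -/
def natSet {n : ℕ} (I : Finset (Fin n)) : Finset ℕ := Finset.image (fun j : Fin n => (j : ℕ) + 1) I

/-- The ordinal number of a subset in the anti-lexicographic order. -/
def ordFin {n : ℕ} (I : Finset (Fin n)) : ℕ := ∑ j ∈ I, 2 ^ (j : ℕ)

/-- The run (maximal interval of consecutive integers) of `I` containing `j`
(empty if `j ∉ I`). -/
def runOf (I : Finset ℕ) (j : ℕ) : Finset ℕ :=
  I.filter (fun i => ∀ k ∈ Finset.Icc (min i j) (max i j), k ∈ I)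

/-- The set of runs (maximal intervals of consecutive integers) of `I`. -/
def runsOf (I : Finset ℕ) : Finset (Finset ℕ) := I.image (runOf I)

/-- `P` is a prefix of the interval `R`: it consists of an initial segment of `R`. -/
def IsPrefixOf (P R : Finset ℕ) : Prop :=
  P ⊆ R ∧ ∀ i ∈ R, ∀ j ∈ P, i ≤ j → i ∈ P


/-- The ordinal number `ord(J) = Σ_{j ∈ J} 2^{j-1}` of a finite set of positive
integers. -/
def ordN (J : Finset ℕ) : ℕ := ∑ j ∈ J, 2 ^ (j - 1)

/-! ### The binomial sums modulo 2 -/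

/-- The sum `∑ [C(m + k, 2k) C(m, k) mod 2]`; here `C(m + k, 2k) = C(m + k, m - k)`
for `k ≤ m`. -/
def binomSum (m : ℕ) : ℕ :=
  ∑ k ∈ Finset.range (m + 1), (Nat.choose (m + k) (2 * k) * Nat.choose m k) % 2

/-- The companion sum `∑ [C(m + k + 1, 2k + 1) C(m, k) mod 2]`, which is the contribution of the
odd indices to `binomSum (2 * m + 1)`. -/
def binomSumOdd (m : ℕ) : ℕ :=
  ∑ k ∈ Finset.range (m + 1), (Nat.choose (m + k + 1) (2 * k + 1) * Nat.choose m k) % 2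

lemma choose_ee (n k : ℕ) : Nat.choose (2 * n) (2 * k) ≡ Nat.choose n k [MOD 2] := by
  have h := @Choose.choose_modEq_choose_mod_mul_choose_div_nat (2 * n) (2 * k) 2 _
  simpa using h

lemma choose_eo (n k : ℕ) : Nat.choose (2 * n) (2 * k + 1) ≡ 0 [MOD 2] := by
  have h := @Choose.choose_modEq_choose_mod_mul_choose_div_nat (2 * n) (2 * k + 1) 2 _
  simpa [Nat.mul_add_mod] using h

lemma choose_oe (n k : ℕ) : Nat.choose (2 * n + 1) (2 * k) ≡ Nat.choose n k [MOD 2] := by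
  have h := @Choose.choose_modEq_choose_mod_mul_choose_div_nat (2 * n + 1) (2 * k) 2 _
  have e : (2 * n + 1) / 2 = n := by omega
  simpa [Nat.mul_add_mod, e] using h

lemma choose_oo (n k : ℕ) : Nat.choose (2 * n + 1) (2 * k + 1) ≡ Nat.choose n k [MOD 2] := by
  have h := @Choose.choose_modEq_choose_mod_mul_choose_div_nat (2 * n + 1) (2 * k + 1) 2 _
  have e : (2 * n + 1) / 2 = n := by omega
  have e' : (2 * k + 1) / 2 = k := by omega
  simpa [Nat.mul_add_mod, e, e'] using h

lemma sum_range_two_mul (f : ℕ → ℕ) (n : ℕ) :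
    ∑ k ∈ Finset.range (2 * n), f k = ∑ j ∈ Finset.range n, (f (2 * j) + f (2 * j + 1)) := by
  induction n with
  | zero => simp
  | succ n ih =>
    rw [show 2 * (n + 1) = 2 * n + 1 + 1 by ring, Finset.sum_range_succ, Finset.sum_range_succ,
      ih, Finset.sum_range_succ, add_assoc]

lemma binomSum_even (m : ℕ) : binomSum (2 * m) = binomSum m := by
  have h : binomSum (2 * m) = ∑ k ∈ Finset.range (2 * (m + 1)),
      (Nat.choose (2 * m + k) (2 * k) * Nat.choose (2 * m) k) % 2 := by
    rw [show 2 * (m + 1) = 2 * m + 1 + 1 by ring, Finset.sum_range_succ _ (2 * m + 1)]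
    simp [binomSum]
  rw [h, sum_range_two_mul, binomSum]
  refine Finset.sum_congr rfl fun j _ => ?_
  have h1 := (choose_ee (m + j) (2 * j)).mul (choose_ee m j)
  have h2 := (choose_eo m j).mul_left (Nat.choose (2 * m + (2 * j + 1)) (2 * (2 * j + 1)))
  rw [mul_add] at h1
  rw [h1, h2]
  simp

lemma binomSumOdd_even (m : ℕ) : binomSumOdd (2 * m) = binomSum m := by
  have h : binomSumOdd (2 * m) = ∑ k ∈ Finset.range (2 * (m + 1)),
      (Nat.choose (2 * m + k + 1) (2 * k + 1) * Nat.choose (2 * m) k) % 2 := by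
    rw [show 2 * (m + 1) = 2 * m + 1 + 1 by ring, Finset.sum_range_succ _ (2 * m + 1)]
    simp [binomSumOdd]
  rw [h, sum_range_two_mul, binomSum]
  refine Finset.sum_congr rfl fun j _ => ?_
  have h1 := (choose_oo (m + j) (2 * j)).mul (choose_ee m j)
  have h2 := (choose_eo m j).mul_left
    (Nat.choose (2 * m + (2 * j + 1) + 1) (2 * (2 * j + 1) + 1))
  rw [mul_add] at h1
  rw [h1, h2]
  simp

lemma binomSum_odd (m : ℕ) : binomSum (2 * m + 1) = binomSum m + binomSumOdd m := by
  rw [binomSum, show 2 * m + 1 + 1 = 2 * (m + 1) by ring, sum_range_two_mul, binomSum,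
    binomSumOdd, ← Finset.sum_add_distrib]
  refine Finset.sum_congr rfl fun j _ => ?_
  have h1 := (choose_oe (m + j) (2 * j)).mul (choose_oe m j)
  have h2 := (choose_ee (m + j + 1) (2 * j + 1)).mul (choose_oo m j)
  rw [show 2 * (m + j) + 1 = 2 * m + 1 + 2 * j by ring] at h1
  rw [show 2 * (m + j + 1) = 2 * m + 1 + (2 * j + 1) by ring] at h2
  rw [h1, h2]

lemma binomSumOdd_odd (m : ℕ) : binomSumOdd (2 * m + 1) = binomSumOdd m := by
  rw [binomSumOdd, show 2 * m + 1 + 1 = 2 * (m + 1) by ring, sum_range_two_mul, binomSumOdd]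
  refine Finset.sum_congr rfl fun j _ => ?_
  have h1 := (choose_eo (m + j + 1) (2 * j)).mul_right (Nat.choose (2 * m + 1) (2 * j))
  have h2 := (choose_oo (m + j + 1) (2 * j + 1)).mul (choose_oo m j)
  rw [show 2 * (m + j + 1) = 2 * m + 1 + 2 * j + 1 by ring] at h1
  rw [show 2 * (m + j + 1) + 1 = 2 * m + 1 + (2 * j + 1) + 1 by ring] at h2
  rw [h1, h2]
  simp

/-- If the binary expansion of `m` is that of `n` followed by a zero and `r` ones, then
`binomSum m = (r + 1) * binomSum n`. The value of `binomSumOdd` is carried along to make the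
induction on `r` work. -/
lemma binomSum_append (n r : ℕ) : ∀ m, m + 1 = 2 ^ r * (2 * n + 1) →
    binomSum m = (r + 1) * binomSum n ∧ binomSumOdd m = binomSum n := by
  induction r with
  | zero =>
    intro m hm
    obtain rfl : m = 2 * n := by omega
    simp [binomSum_even, binomSumOdd_even]
  | succ r ih =>
    intro m hm
    have hp : 0 < 2 ^ r * (2 * n + 1) := by positivity
    rw [pow_succ, mul_right_comm] at hm
    obtain ⟨q, rfl⟩ : ∃ q, m = 2 * q + 1 := ⟨2 ^ r * (2 * n + 1) - 1, by omega⟩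
    obtain ⟨h1, h2⟩ := ih q (by omega)
    rw [binomSum_odd, binomSumOdd_odd, h1, h2]
    exact ⟨by ring, rfl⟩

/-! ### Prepending a run -/

/-- The set `{1, …, r} ∪ (K + (r + 1))`. -/
def prependRun (r : ℕ) (K : Finset ℕ) : Finset ℕ :=
  Finset.Icc 1 r ∪ K.image (· + (r + 1))

lemma mem_prependRun {r i : ℕ} {K : Finset ℕ} :
    i ∈ prependRun r K ↔ (1 ≤ i ∧ i ≤ r) ∨ ∃ k ∈ K, k + (r + 1) = i := by
  simp [prependRun]

lemma add_mem_prependRun {r i : ℕ} {K : Finset ℕ} :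
    i + (r + 1) ∈ prependRun r K ↔ i ∈ K := by
  rw [mem_prependRun]
  constructor
  · rintro (h | ⟨k, hk, h⟩)
    · omega
    · obtain rfl : k = i := by omega
      exact hk
  · exact fun h => Or.inr ⟨i, h, rfl⟩

/-- The positivity of `K` guarantees that `{1, …, r}` is separated from `K + (r + 1)`. -/
lemma gap_notMem_prependRun {r : ℕ} {K : Finset ℕ} (hK : ∀ j ∈ K, 1 ≤ j) :
    r + 1 ∉ prependRun r K := by
  rw [mem_prependRun]
  rintro (h | ⟨k, hk, h⟩)
  · omega
  · have := hK k hk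
    omega

lemma ordN_prependRun (r : ℕ) {K : Finset ℕ} (hK : ∀ j ∈ K, 1 ≤ j) :
    ordN (prependRun r K) + 1 = 2 ^ r * (2 * ordN K + 1) := by
  have hd : Disjoint (Finset.Icc 1 r) (K.image (· + (r + 1))) := by
    rw [Finset.disjoint_left]
    simp only [Finset.mem_Icc, Finset.mem_image, not_exists, not_and]
    omega
  have h1 : ∑ j ∈ Finset.Icc 1 r, 2 ^ (j - 1) + 1 = 2 ^ r := by
    induction r with
    | zero => simp
    | succ r ih =>
      have := ih (by
        rw [Finset.disjoint_left]
        simp only [Finset.mem_Icc, Finset.mem_image, not_exists, not_and]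
        omega)
      rw [Finset.sum_Icc_succ_top (by omega), Nat.add_sub_cancel, pow_succ]
      omega
  have h2 : ∑ j ∈ K.image (· + (r + 1)), 2 ^ (j - 1) = 2 ^ r * (2 * ordN K) := by
    rw [Finset.sum_image (fun x _ y _ h => by simpa using h), ordN, ← mul_assoc,
      Finset.mul_sum]
    refine Finset.sum_congr rfl fun j hj => ?_
    obtain ⟨i, rfl⟩ : ∃ i, j = i + 1 := ⟨j - 1, by have := hK j hj; omega⟩
    rw [show i + 1 + (r + 1) - 1 = r + 1 + i by omega, Nat.add_sub_cancel]
    ring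
  rw [ordN, prependRun, Finset.sum_union hd, h2, mul_add, ← h1]
  ring

lemma runOf_prependRun_low {r i : ℕ} {K : Finset ℕ} (hK : ∀ j ∈ K, 1 ≤ j)
    (hi : i ∈ Finset.Icc 1 r) : runOf (prependRun r K) i = Finset.Icc 1 r := by
  rw [Finset.mem_Icc] at hi
  ext x
  rw [runOf, Finset.mem_filter, Finset.mem_Icc]
  constructor
  · rintro ⟨hx, hall⟩
    rcases mem_prependRun.1 hx with h | ⟨k, hk, rfl⟩
    · exact h
    · exact absurd (hall (r + 1) (by rw [Finset.mem_Icc]; omega)) (gap_notMem_prependRun hK)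
  · intro hx
    refine ⟨mem_prependRun.2 (Or.inl hx), fun k hk => mem_prependRun.2 (Or.inl ?_)⟩
    rw [Finset.mem_Icc] at hk
    omega

lemma runOf_prependRun_high {r i : ℕ} {K : Finset ℕ} (hK : ∀ j ∈ K, 1 ≤ j) :
    runOf (prependRun r K) (i + (r + 1)) = (runOf K i).image (· + (r + 1)) := by
  ext x
  simp only [runOf, Finset.mem_filter, Finset.mem_image]
  constructor
  · rintro ⟨hx, hall⟩
    rcases mem_prependRun.1 hx with h | ⟨k, hk, rfl⟩
    · exact absurd (hall (r + 1) (by rw [Finset.mem_Icc]; omega)) (gap_notMem_prependRun hK)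
    · refine ⟨k, ⟨hk, fun l hl => ?_⟩, rfl⟩
      rw [Finset.mem_Icc] at hl
      exact add_mem_prependRun.1 (hall (l + (r + 1)) (by rw [Finset.mem_Icc]; omega))
  · rintro ⟨k, ⟨hk, hall⟩, rfl⟩
    refine ⟨add_mem_prependRun.2 hk, fun l hl => ?_⟩
    rw [Finset.mem_Icc] at hl
    obtain ⟨l', rfl⟩ : ∃ l', l = l' + (r + 1) := ⟨l - (r + 1), by omega⟩
    exact add_mem_prependRun.2 (hall l' (by rw [Finset.mem_Icc]; omega))

lemma runsOf_prependRun (r : ℕ) {K : Finset ℕ} (hK : ∀ j ∈ K, 1 ≤ j) :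
    runsOf (prependRun r K) = (Finset.Icc 1 r).image (fun _ => Finset.Icc 1 r) ∪
      (runsOf K).image (Finset.image (· + (r + 1))) := by
  conv_lhs => rw [runsOf]; arg 2; rw [prependRun]
  rw [Finset.image_union, Finset.image_image, runsOf, Finset.image_image]
  congr 1
  · exact Finset.image_congr fun i hi => runOf_prependRun_low hK hi
  · exact Finset.image_congr fun i _ => runOf_prependRun_high hK

/-- For `r = 0` no run is added, in accordance with the factor `r + 1 = 1`. -/
lemma prod_runsOf_prependRun (r : ℕ) {K : Finset ℕ} (hK : ∀ j ∈ K, 1 ≤ j) :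
    ∏ R ∈ runsOf (prependRun r K), (R.card + 1) = (r + 1) * ∏ R ∈ runsOf K, (R.card + 1) := by
  have hinj : Function.Injective (· + (r + 1) : ℕ → ℕ) := add_left_injective _
  have h2 : ∏ R ∈ (runsOf K).image (Finset.image (· + (r + 1))), (R.card + 1)
      = ∏ R ∈ runsOf K, (R.card + 1) := by
    rw [Finset.prod_image (fun x _ y _ h => Finset.image_injective hinj h)]
    exact Finset.prod_congr rfl fun R _ => by rw [Finset.card_image_of_injective _ hinj]
  rw [runsOf_prependRun r hK]
  rcases Nat.eq_zero_or_pos r with rfl | hr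
  · simpa using h2
  · rw [Finset.image_const (Finset.nonempty_Icc.2 hr), Finset.prod_union, h2]
    · simp
    · rw [Finset.disjoint_singleton_left, Finset.mem_image]
      rintro ⟨R, -, hR⟩
      have h1 : 1 ∈ R.image (· + (r + 1)) := by rw [hR, Finset.mem_Icc]; omega
      obtain ⟨x, -, hx⟩ := Finset.mem_image.1 h1
      omega

/-! ### Comparison of the two recursions -/

lemma exists_set_prod_runs_eq (m : ℕ) : ∃ J : Finset ℕ, (∀ j ∈ J, 1 ≤ j) ∧ ordN J = m ∧
    ∏ R ∈ runsOf J, (R.card + 1) = binomSum m := by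
  induction m using Nat.strong_induction_on with
  | _ m ih =>
    rcases Nat.eq_zero_or_pos m with rfl | hm
    · exact ⟨∅, by simp, by simp [ordN], by simp [runsOf, binomSum]⟩
    obtain ⟨r, q, ⟨n, rfl⟩, hr⟩ := Nat.exists_eq_two_pow_mul_odd (Nat.succ_ne_zero m)
    have hle : 2 * n + 1 ≤ m + 1 :=
      (Nat.le_mul_of_pos_left _ (by positivity)).trans_eq hr.symm
    obtain ⟨K, hK, hord, hprod⟩ := ih n (by omega)
    refine ⟨prependRun r K, ?_, ?_, ?_⟩
    · intro j hj
      rcases mem_prependRun.1 hj with h | ⟨k, -, rfl⟩ <;> omega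
    · have := ordN_prependRun r hK
      rw [hord, ← hr] at this
      exact Nat.succ_injective this
    · rw [prod_runsOf_prependRun r hK, hprod, (binomSum_append n r m hr).1]

/-- The sequence `a` defined by `a_{ord(J)} = ∏_k (|J_k|+1)`
(product over the runs of `J`, for finite sets `J` of positive integers) satisfies
`a_m = Σ_{k=0}^m [C(m+k, m−k)·C(m,k) mod 2]`. -/
theorem diag_sequence_formula (a : ℕ → ℕ)
    (ha : ∀ J : Finset ℕ, (∀ j ∈ J, 1 ≤ j) →
      a (ordN J) = ∏ R ∈ runsOf J, (R.card + 1)) :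
    ∀ m : ℕ, a m = ∑ k ∈ Finset.range (m + 1),
      (Nat.choose (m + k) (m - k) * Nat.choose m k) % 2 := by
  intro m
  obtain ⟨J, hJ, hord, hprod⟩ := exists_set_prod_runs_eq m
  rw [← hord, ha J hJ, hprod, hord, binomSum]
  refine Finset.sum_congr rfl fun k hk => ?_
  rw [Finset.mem_range] at hk
  rw [Nat.choose_symm_of_eq_add (show m + k = 2 * k + (m - k) by omega)]
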